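/- Let P ∈ ℤ[X] be a nonzero polynomial and let n ≥ 2 be an integer. Then the product Φ_n(X)·P(X) divides some Newman polynomial if and only if P divides some Newman polynomial, where Φ_n denotes the n-th cyclotomic polynomial. -/

import Mathlib

open Polynomial

/-- A Newman polynomial: an integer polynomial with all coefficients `0` or `1`
and constant term `1`. -/
def IsNewman (P : Polynomial ℤ) : Prop :=
  P.coeff 0 = 1 ∧ ∀ i, P.coeff i = 0 ∨ P.coeff i = 1

theorem IsNewman.add_X_pow_mul {A B : ℤ[X]} (hA : IsNewman A) (hB : IsNewman B) {M : ℕ}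
    (hM : A.natDegree < M) : IsNewman (A + X ^ M * B) := by
  refine ⟨?_, fun i => ?_⟩
  · rw [coeff_add, coeff_X_pow_mul', if_neg (by omega), hA.1, add_zero]
  · rw [coeff_add, coeff_X_pow_mul']
    split_ifs with h
    · rw [coeff_eq_zero_of_natDegree_lt (hM.trans_le h), zero_add]
      exact hB.2 _
    · rw [add_zero]
      exact hA.2 _

theorem IsNewman.mul_geom_sum {A : ℤ[X]} (hA : IsNewman A) {M : ℕ} (hM : A.natDegree < M)
    (k : ℕ) : IsNewman (A * ∑ i ∈ Finset.range (k + 1), (X ^ M) ^ i) := by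
  induction k with
  | zero => simpa using hA
  | succ k ih =>
    rw [geom_sum_succ, show A * (X ^ M * ∑ i ∈ Finset.range (k + 1), (X ^ M) ^ i + 1) =
      A + X ^ M * (A * ∑ i ∈ Finset.range (k + 1), (X ^ M) ^ i) by ring]
    exact hA.add_X_pow_mul ih hM

/-- If `M ≡ 1 [MOD n]`, then `Φ_n` divides `1 + X ^ M + ⋯ + X ^ (M * (n - 1))`. -/
theorem cyclotomic_dvd_geom_sum_X_pow {n : ℕ} (hn : 2 ≤ n) (t : ℕ) :
    cyclotomic n ℤ ∣ ∑ i ∈ Finset.range n, (X ^ (n * t + 1)) ^ i := by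
  have hζ := Complex.isPrimitiveRoot_exp n (by omega)
  rw [cyclotomic_eq_minpoly hζ (by omega)]
  refine minpoly.isIntegrallyClosed_dvd (hζ.isIntegral (by omega)) ?_
  simp only [map_sum, map_pow, aeval_X]
  rw [pow_succ, pow_mul, hζ.pow_eq_one, one_pow, one_mul]
  exact hζ.geom_sum_eq_zero (by omega)

theorem cyclotomic_factor_newman_multiple
    (P : Polynomial ℤ) (hP : P ≠ 0) (n : ℕ) (hn : 2 ≤ n) :
    (∃ N : Polynomial ℤ, IsNewman N ∧ cyclotomic n ℤ * P ∣ N) ↔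
      (∃ N : Polynomial ℤ, IsNewman N ∧ P ∣ N) := by
  constructor
  · rintro ⟨N, hN, h⟩
    exact ⟨N, hN, dvd_of_mul_left_dvd h⟩
  · rintro ⟨N, hN, h⟩
    have hM : N.natDegree < n * N.natDegree + 1 := by nlinarith
    refine ⟨_, hN.mul_geom_sum hM (n - 1), ?_⟩
    rw [Nat.sub_add_cancel (by omega), mul_comm N]
    exact mul_dvd_mul (cyclotomic_dvd_geom_sum_X_pow hn _) h
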